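/- Let χ be a sentence of dependence logic not containing the variables y,v,u,u'. Let 𝔄 be a model with at least two elements, let Y be a unary relation symbol occurring neither in χ nor in the vocabulary of 𝔄, and let S ⊆ A. Let ({∅}, V) be a suitable pair for 𝔄, S, (y,v,u,u') and (χ,χ), where {∅} is the team containing only the empty assignment. Then (𝔄, Y↦S), {∅} ⊨ χ if and only if 𝔄, V ⊨ T_Y^y(χ). -/

import Mathlib

/- STATEMENT 8: Lemma on the translation T_Y^y from dependence logic to D⁺. -/

/-- Assignments with a finite domain: a variable outside the domain is sent to `none`. -/
abbrev PAssign (A : Type) := ℕ → Option A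

/-- `s[a/x]`. -/
def pupdate {A : Type} (s : PAssign A) (x : ℕ) (a : A) : PAssign A :=
  fun w => if w = x then some a else s w

/-- A model for a purely relational vocabulary `σ` with arities `ar`. -/
structure TModel (σ : Type) (ar : σ → ℕ) : Type 1 where
  A : Type
  ne : Nonempty A
  rel : ∀ R : σ, (Fin (ar R) → A) → Prop

/-- Formulas of D⁺: first-order logic in negation normal form extended with dependence,
conditional independence, inclusion and exclusion atoms. -/
inductive TLForm (σ : Type) (ar : σ → ℕ) : Type
  | rel (R : σ) (ts : Fin (ar R) → ℕ)
  | nrel (R : σ) (ts : Fin (ar R) → ℕ)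
  | eq (x y : ℕ)
  | neq (x y : ℕ)
  | dep (k : ℕ) (xs : Fin k → ℕ) (x : ℕ)                          -- =(x₁,...,x_k,x)
  | incl (k : ℕ) (xs ys : Fin k → ℕ)                              -- x̄ ⊆ ȳ
  | excl (k : ℕ) (xs ys : Fin k → ℕ)                              -- x̄ | ȳ
  | cindep (k m p : ℕ) (xs : Fin k → ℕ) (zs : Fin m → ℕ) (ys : Fin p → ℕ)  -- x̄ ⊥_{z̄} ȳ
  | and (φ ψ : TLForm σ ar)
  | or (φ ψ : TLForm σ ar)
  | all (x : ℕ) (φ : TLForm σ ar)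
  | ex (x : ℕ) (φ : TLForm σ ar)

/-- Lax team semantics for D⁺. -/
def TSat {σ : Type} {ar : σ → ℕ} (M : TModel σ ar) : Set (PAssign M.A) → TLForm σ ar → Prop
  | U, .rel R ts => ∀ s ∈ U, ∃ vv : Fin (ar R) → M.A,
      (∀ i, s (ts i) = some (vv i)) ∧ M.rel R vv
  | U, .nrel R ts => ∀ s ∈ U, ∃ vv : Fin (ar R) → M.A,
      (∀ i, s (ts i) = some (vv i)) ∧ ¬ M.rel R vv
  | U, .eq x y => ∀ s ∈ U, ∃ a : M.A, s x = some a ∧ s y = some a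
  | U, .neq x y => ∀ s ∈ U, ∃ a b : M.A, s x = some a ∧ s y = some b ∧ a ≠ b
  | U, .dep _ xs x => ∀ s ∈ U, ∀ t ∈ U, (∀ i, s (xs i) = t (xs i)) → s x = t x
  | U, .incl _ xs ys => ∀ s ∈ U, ∃ t ∈ U, ∀ i, t (ys i) = s (xs i)
  | U, .excl _ xs ys => ∀ s ∈ U, ∀ t ∈ U, ¬ (∀ i, s (xs i) = t (ys i))
  | U, .cindep _ _ _ xs zs ys => ∀ s ∈ U, ∀ s' ∈ U, (∀ i, s (zs i) = s' (zs i)) →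
      ∃ t ∈ U, (∀ i, t (xs i) = s (xs i)) ∧ (∀ i, t (zs i) = s (zs i)) ∧
        (∀ i, t (ys i) = s' (ys i))
  | U, .and φ ψ => TSat M U φ ∧ TSat M U ψ
  | U, .or φ ψ => ∃ U₀ U₁ : Set (PAssign M.A),
      U₀ ⊆ U ∧ U₁ ⊆ U ∧ U₀ ∪ U₁ = U ∧ TSat M U₀ φ ∧ TSat M U₁ ψ
  | U, .all x φ => TSat M {t | ∃ s ∈ U, ∃ a : M.A, t = pupdate s x a} φ
  | U, .ex x φ => ∃ f : PAssign M.A → Set M.A, (∀ s ∈ U, (f s).Nonempty) ∧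
      TSat M {t | ∃ s ∈ U, ∃ a ∈ f s, t = pupdate s x a} φ


/-- Free variables of a D⁺ formula. -/
def TLForm.freeVars {σ : Type} {ar : σ → ℕ} : TLForm σ ar → Finset ℕ
  | .rel _ ts => Finset.univ.image ts
  | .nrel _ ts => Finset.univ.image ts
  | .eq x y => {x, y}
  | .neq x y => {x, y}
  | .dep _ xs x => insert x (Finset.univ.image xs)
  | .incl _ xs ys => Finset.univ.image xs ∪ Finset.univ.image ys
  | .excl _ xs ys => Finset.univ.image xs ∪ Finset.univ.image ys
  | .cindep _ _ _ xs zs ys =>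
      Finset.univ.image xs ∪ Finset.univ.image zs ∪ Finset.univ.image ys
  | .and φ ψ => φ.freeVars ∪ ψ.freeVars
  | .or φ ψ => φ.freeVars ∪ ψ.freeVars
  | .all x φ => φ.freeVars.erase x
  | .ex x φ => φ.freeVars.erase x

/-- All variables occurring in a D⁺ formula (free or bound). -/
def TLForm.vars {σ : Type} {ar : σ → ℕ} : TLForm σ ar → Finset ℕ
  | .rel _ ts => Finset.univ.image ts
  | .nrel _ ts => Finset.univ.image ts
  | .eq x y => {x, y}
  | .neq x y => {x, y}
  | .dep _ xs x => insert x (Finset.univ.image xs)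
  | .incl _ xs ys => Finset.univ.image xs ∪ Finset.univ.image ys
  | .excl _ xs ys => Finset.univ.image xs ∪ Finset.univ.image ys
  | .cindep _ _ _ xs zs ys =>
      Finset.univ.image xs ∪ Finset.univ.image zs ∪ Finset.univ.image ys
  | .and φ ψ => φ.vars ∪ ψ.vars
  | .or φ ψ => φ.vars ∪ ψ.vars
  | .all x φ => insert x φ.vars
  | .ex x φ => insert x φ.vars

/-- The formula is a formula of dependence logic: it uses only first-order constructs
and dependence atoms. -/
def TLForm.IsDL {σ : Type} {ar : σ → ℕ} : TLForm σ ar → Prop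
  | .rel _ _ => True
  | .nrel _ _ => True
  | .eq _ _ => True
  | .neq _ _ => True
  | .dep _ _ _ => True
  | .incl _ _ _ => False
  | .excl _ _ _ => False
  | .cindep _ _ _ _ _ _ => False
  | .and φ ψ => φ.IsDL ∧ ψ.IsDL
  | .or φ ψ => φ.IsDL ∧ ψ.IsDL
  | .all _ φ => φ.IsDL
  | .ex _ φ => φ.IsDL

/-- The relation symbol `R₀` occurs in the formula. -/
def TLForm.UsesRel {σ : Type} {ar : σ → ℕ} (R₀ : σ) : TLForm σ ar → Prop
  | .rel R _ => R = R₀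
  | .nrel R _ => R = R₀
  | .and φ ψ => φ.UsesRel R₀ ∨ ψ.UsesRel R₀
  | .or φ ψ => φ.UsesRel R₀ ∨ ψ.UsesRel R₀
  | .all _ φ => φ.UsesRel R₀
  | .ex _ φ => φ.UsesRel R₀
  | _ => False

/-- The vocabulary `τ ∪ {Y}` where `Y` is a fresh unary relation symbol (`Sum.inr ()`). -/
def arY {σ : Type} (ar : σ → ℕ) : σ ⊕ Unit → ℕ := Sum.elim ar fun _ => 1

/-- The expansion `(𝔄, Y ↦ S)` of `𝔄` interpreting the fresh unary symbol `Y` as `S`. -/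
def expandY {σ : Type} {ar : σ → ℕ} (M : TModel σ ar) (S : Set M.A) :
    TModel (σ ⊕ Unit) (arY ar) where
  A := M.A
  ne := M.ne
  rel := fun R => match R with
    | Sum.inl R' => M.rel R'
    | Sum.inr _ => fun w => w ⟨0, Nat.one_pos⟩ ∈ S

/-- The translation `T_Y^y` (with fixed parameter variables `y,v,u,u'`) from dependence
logic over `τ ∪ {Y}` into D⁺ over `τ`.  The `Finset` argument accumulates the variables
quantified superordinate to the current subformula in the translated sentence, and the
`Bool` argument records whether the current subformula is subordinate to a disjunction. -/
def Ttr {σ : Type} {ar : σ → ℕ} (y v u u' : ℕ) :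
    Finset ℕ → Bool → TLForm (σ ⊕ Unit) (arY ar) → TLForm σ ar
  | _, _, .rel (Sum.inl R) ts => .rel R ts
  | _, _, .rel (Sum.inr _) ts => .incl 1 (fun _ => ts ⟨0, Nat.one_pos⟩) (fun _ => y)
  | _, _, .nrel (Sum.inl R) ts => .nrel R ts
  | _, _, .nrel (Sum.inr _) ts => .excl 1 (fun _ => ts ⟨0, Nat.one_pos⟩) (fun _ => y)
  | _, _, .eq x z => .eq x z
  | _, _, .neq x z => .neq x z
  | _, _, .dep k xs x => .dep k xs x
  | _, _, .incl k xs ys => .incl k xs ys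
  | _, _, .excl k xs ys => .excl k xs ys
  | _, _, .cindep k m p xs zs ys => .cindep k m p xs zs ys
  | zs, b, .and φ ψ => .and (Ttr y v u u' zs b φ) (Ttr y v u u' zs b ψ)
  | zs, _, .or φ ψ =>
      let l := zs.sort (· ≤ ·)
      .ex v (.and (.cindep 1 l.length 1 (fun _ => v) l.get (fun _ => y))
        (.or (.and (Ttr y v u u' zs true φ) (.eq v u))
             (.and (Ttr y v u u' zs true ψ) (.eq v u'))))
  | zs, b, .all x φ => .all x (Ttr y v u u' (insert x zs) b φ)
  | zs, b, .ex x φ =>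
      let l := ((zs.erase x).sort (· ≤ ·))
      if b then
        .ex x (.and
          (.cindep 1 l.length 2 (fun _ => x) l.get (fun i => if i.val = 0 then y else v))
          (Ttr y v u u' (insert x zs) b φ))
      else
        .ex x (.and (.cindep 1 l.length 1 (fun _ => x) l.get (fun _ => y))
          (Ttr y v u u' (insert x zs) b φ))

/-- The restriction `s ↾ Z` of an assignment to the variables in `Z`. -/
def restrictP {A : Type} (s : PAssign A) (Z : Finset ℕ) : PAssign A :=
  fun x => if x ∈ Z then s x else none

/-- `(U,V)` is a suitable pair for `𝔄` (with domain `A`), `S ⊆ A`, `(y,v,u,u')` and a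
(sub)formula whose superordinately quantified variables are `Z` and which is subordinate
to a disjunction iff `subDisj`:
(1) the domain of `U` is `Z`, and the domain of `V` is `Z ∪ {y,u,u'}`, with `v` added
iff `subDisj`; (2) `U = V ↾ Z`; (3) `V = X[S/y]` for some team `X`; (4) all assignments
in `V` agree on `u` and on `u'`, with distinct values: `s(u) = t(u) ≠ t(u') = s(u')`. -/
def SuitablePair (A : Type) (S : Set A) (y v u u' : ℕ) (Z : Finset ℕ) (subDisj : Bool)
    (U V : Set (PAssign A)) : Prop :=
  (∀ s ∈ U, ∀ x : ℕ, (s x ≠ none ↔ x ∈ Z)) ∧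
  (∀ s ∈ V, ∀ x : ℕ,
    (s x ≠ none ↔ x ∈ (if subDisj then Z ∪ {y, v, u, u'} else Z ∪ {y, u, u'}))) ∧
  U = (fun s => restrictP s Z) '' V ∧
  (∃ X : Set (PAssign A), V = {t | ∃ s ∈ X, ∃ a ∈ S, t = pupdate s y a}) ∧
  (∀ s ∈ V, ∀ t ∈ V, s u = t u ∧ t u ≠ t u' ∧ t u' = s u')

/-- The empty assignment. -/
def emptyA {A : Type} : PAssign A := fun _ => none

section Helpers

variable {A : Type}

theorem pupdate_self (s : PAssign A) (x : ℕ) (a : A) : pupdate s x a x = some a := by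
  simp [pupdate]

theorem pupdate_of_ne (s : PAssign A) {x w : ℕ} (a : A) (h : w ≠ x) :
    pupdate s x a w = s w := by
  simp [pupdate, h]

theorem pupdate_comm (s : PAssign A) {x w : ℕ} (h : x ≠ w) (a c : A) :
    pupdate (pupdate s x a) w c = pupdate (pupdate s w c) x a := by
  funext i
  simp only [pupdate]
  grind

theorem restrictP_of_mem (s : PAssign A) {Z : Finset ℕ} {x : ℕ} (h : x ∈ Z) :
    restrictP s Z x = s x := by
  simp [restrictP, h]

theorem restrictP_eq_iff {s t : PAssign A} {Z : Finset ℕ} :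
    restrictP s Z = restrictP t Z ↔ ∀ z ∈ Z, s z = t z := by
  simp only [funext_iff, restrictP]
  grind

theorem restrictP_pupdate_of_notMem (s : PAssign A) {Z : Finset ℕ} {x : ℕ} (h : x ∉ Z) (a : A) :
    restrictP (pupdate s x a) Z = restrictP s Z := by
  rw [restrictP_eq_iff]
  exact fun z hz => pupdate_of_ne s a fun e => h (e ▸ hz)

theorem restrictP_pupdate_insert (s : PAssign A) (Z : Finset ℕ) (x : ℕ) (a : A) :
    restrictP (pupdate s x a) (insert x Z) = pupdate (restrictP s Z) x a := by
  funext i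
  simp only [restrictP, pupdate, Finset.mem_insert]
  grind

/-- The supplemented team `V[f/x]`. -/
def supplement (V : Set (PAssign A)) (f : PAssign A → Set A) (x : ℕ) : Set (PAssign A) :=
  {t | ∃ s ∈ V, ∃ a ∈ f s, t = pupdate s x a}

/-- The domain of the second component of a suitable pair. -/
def suitableDom (y v u u' : ℕ) (Z : Finset ℕ) (b : Bool) : Finset ℕ :=
  if b then Z ∪ {y, v, u, u'} else Z ∪ {y, u, u'}

theorem mem_suitableDom {y v u u' : ℕ} {Z : Finset ℕ} {b : Bool} {x : ℕ} :
    x ∈ suitableDom y v u u' Z b ↔ x ∈ Z ∨ x = y ∨ (b = true ∧ x = v) ∨ x = u ∨ x = u' := by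
  cases b <;> simp [suitableDom] <;> tauto

/-- The conditions on the second component of a suitable pair, with `V = X[S/y]` unfolded into
closure under changing the value of `y` within `S`. -/
structure SuitableTeam (S : Set A) (y v u u' : ℕ) (Z : Finset ℕ) (b : Bool)
    (V : Set (PAssign A)) : Prop where
  dom : ∀ s ∈ V, ∀ x, s x ≠ none ↔ x ∈ suitableDom y v u u' Z b
  closed : ∀ s ∈ V, ∀ c ∈ S, pupdate s y c ∈ V
  val : ∀ s ∈ V, ∃ c ∈ S, s y = some c
  agree : ∀ s ∈ V, ∀ t ∈ V, s u = t u ∧ s u' = t u'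
  ne : ∀ s ∈ V, s u ≠ s u'

theorem SuitablePair.suitableTeam {S : Set A} {y v u u' : ℕ} {Z : Finset ℕ} {b : Bool}
    {U V : Set (PAssign A)} (h : SuitablePair A S y v u u' Z b U V) :
    SuitableTeam S y v u u' Z b V := by
  obtain ⟨-, hdom, -, ⟨X, rfl⟩, hu⟩ := h
  refine ⟨hdom, ?_, ?_, fun s hs t ht => ⟨(hu s hs t ht).1, (hu s hs t ht).2.2.symm⟩,
    fun s hs => (hu s hs s hs).2.1⟩
  · rintro _ ⟨s, hs, a, -, rfl⟩ c hc
    refine ⟨s, hs, c, hc, ?_⟩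
    funext i
    simp only [pupdate]
    grind
  · rintro _ ⟨s, -, a, ha, rfl⟩
    exact ⟨a, ha, pupdate_self s y a⟩

theorem SuitableTeam.of_supplement {S : Set A} {y v u u' : ℕ} {Z : Finset ℕ} {b : Bool}
    {V : Set (PAssign A)} (hV : SuitableTeam S y v u u' Z b V) {x : ℕ} {f : PAssign A → Set A}
    (hx : x ≠ y ∧ x ≠ u ∧ x ≠ u')
    (hcl : ∀ s ∈ supplement V f x, ∀ c ∈ S, pupdate s y c ∈ supplement V f x) :
    SuitableTeam S y v u u' (insert x Z) b (supplement V f x) := by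
  obtain ⟨hxy, hxu, hxu'⟩ := hx
  refine ⟨?_, hcl, ?_, ?_, ?_⟩
  · rintro _ ⟨s, hs, a, -, rfl⟩ w
    have := hV.dom s hs w
    by_cases hw : w = x
    · subst hw
      simp only [pupdate_self, suitableDom]
      grind
    · rw [pupdate_of_ne s a hw, this]
      simp only [suitableDom]
      grind
  · rintro _ ⟨s, hs, a, -, rfl⟩
    rw [pupdate_of_ne s a hxy.symm]
    exact hV.val s hs
  · rintro _ ⟨s, hs, a, -, rfl⟩ _ ⟨t, ht, c, -, rfl⟩
    simp only [pupdate_of_ne _ _ hxu.symm, pupdate_of_ne _ _ hxu'.symm]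
    exact hV.agree s hs t ht
  · rintro _ ⟨s, hs, a, -, rfl⟩
    simp only [pupdate_of_ne _ _ hxu.symm, pupdate_of_ne _ _ hxu'.symm]
    exact hV.ne s hs

theorem SuitableTeam.of_subset_supplement {S : Set A} {y v u u' : ℕ} {Z : Finset ℕ} {b : Bool}
    {V W : Set (PAssign A)} (hV : SuitableTeam S y v u u' Z b V) {f : PAssign A → Set A}
    (hv : v ≠ y ∧ v ≠ u ∧ v ≠ u') (hW : W ⊆ supplement V f v)
    (hcl : ∀ s ∈ W, ∀ c ∈ S, pupdate s y c ∈ W) :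
    SuitableTeam S y v u u' Z true W := by
  obtain ⟨hvy, hvu, hvu'⟩ := hv
  refine ⟨?_, hcl, ?_, ?_, ?_⟩
  · intro _ h w
    obtain ⟨s, hs, a, -, rfl⟩ := hW h
    have := hV.dom s hs w
    by_cases hw : w = v
    · subst hw
      simp [pupdate_self, suitableDom]
    · rw [pupdate_of_ne s a hw, this]
      simp only [suitableDom]
      grind
  · intro _ h
    obtain ⟨s, hs, a, -, rfl⟩ := hW h
    rw [pupdate_of_ne s a hvy.symm]
    exact hV.val s hs
  · intro _ h _ h'
    obtain ⟨s, hs, a, -, rfl⟩ := hW h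
    obtain ⟨t, ht, c, -, rfl⟩ := hW h'
    simp only [pupdate_of_ne _ _ hvu.symm, pupdate_of_ne _ _ hvu'.symm]
    exact hV.agree s hs t ht
  · intro _ h
    obtain ⟨s, hs, a, -, rfl⟩ := hW h
    simp only [pupdate_of_ne _ _ hvu.symm, pupdate_of_ne _ _ hvu'.symm]
    exact hV.ne s hs

/-- If `f` ignores `y`, then `V[f/x]` inherits closure under changing `y`. -/
theorem supplement_closed {S : Set A} {y x : ℕ} (hxy : x ≠ y) {V : Set (PAssign A)}
    {f : PAssign A → Set A} (hV : ∀ s ∈ V, ∀ c ∈ S, pupdate s y c ∈ V)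
    (hf : ∀ s c, f (pupdate s y c) = f s) :
    ∀ s ∈ supplement V f x, ∀ c ∈ S, pupdate s y c ∈ supplement V f x := by
  rintro _ ⟨s, hs, a, ha, rfl⟩ c hc
  exact ⟨pupdate s y c, hV s hs c hc, a, (hf s c).symm ▸ ha, pupdate_comm s hxy a c⟩

theorem image_restrictP_supplement (V : Set (PAssign A)) (f : PAssign A → Set A)
    (Z : Finset ℕ) (x : ℕ) :
    (fun s => restrictP s (insert x Z)) '' supplement V f x =
      supplement ((fun s => restrictP s Z) '' V)
        (fun r => {a | ∃ t ∈ V, restrictP t Z = r ∧ a ∈ f t}) x := by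
  ext r
  constructor
  · rintro ⟨_, ⟨s, hs, a, ha, rfl⟩, rfl⟩
    exact ⟨_, ⟨s, hs, rfl⟩, a, ⟨s, hs, rfl, ha⟩, restrictP_pupdate_insert s Z x a⟩
  · rintro ⟨_, -, a, ⟨t, ht, rfl, ha⟩, rfl⟩
    exact ⟨_, ⟨t, ht, a, ha, rfl⟩, restrictP_pupdate_insert t Z x a⟩

/-- The independence atom `x ⊥_F Q`, for sets `F` and `Q` of variables. -/
def IndepOver (W : Set (PAssign A)) (F : Finset ℕ) (x : ℕ) (Q : Finset ℕ) : Prop :=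
  ∀ s ∈ W, ∀ s' ∈ W, (∀ z ∈ F, s z = s' z) →
    ∃ t ∈ W, t x = s x ∧ (∀ z ∈ F, t z = s z) ∧ ∀ q ∈ Q, t q = s' q

theorem forall_sort_get {F : Finset ℕ} {p : ℕ → Prop} :
    (∀ i : Fin (F.sort (· ≤ ·)).length, p ((F.sort (· ≤ ·)).get i)) ↔ ∀ z ∈ F, p z := by
  rw [← List.forall_mem_iff_get]
  simp

/-- Independence of `x` from the remaining variables makes `V[f/x]` closed under changing `y`. -/
theorem SuitableTeam.closed_of_indepOver {S : Set A} {y v u u' : ℕ} {Z : Finset ℕ} {b : Bool}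
    {V : Set (PAssign A)} (hV : SuitableTeam S y v u u' Z b V) {x : ℕ} {f : PAssign A → Set A}
    (hf : ∀ s ∈ V, (f s).Nonempty) (hx : x ≠ y ∧ x ≠ u ∧ x ≠ u')
    (hyZ : y ∉ Z) {Q : Finset ℕ} (hyQ : y ∈ Q)
    (hvQ : b = true → v ≠ x → v ∈ Q)
    (hind : IndepOver (supplement V f x) (Z.erase x) x Q) :
    ∀ s ∈ supplement V f x, ∀ c ∈ S, pupdate s y c ∈ supplement V f x := by
  obtain ⟨hxy, hxu, hxu'⟩ := hx
  rintro _ ⟨t, ht, a, ha, rfl⟩ c hc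
  have htc := hV.closed t ht c hc
  obtain ⟨a', ha'⟩ := hf _ htc
  obtain ⟨_, ⟨r, hr, a'', ha'', rfl⟩, h1, h2, h3⟩ :=
    hind (pupdate t x a) ⟨t, ht, a, ha, rfl⟩ (pupdate (pupdate t y c) x a') ⟨_, htc, a', ha', rfl⟩
      (by intro z hz; simp only [pupdate]; grind)
  suffices h : pupdate (pupdate t x a) y c = pupdate r x a'' from h ▸ ⟨r, hr, a'', ha'', rfl⟩
  funext w
  by_cases hw : w ∈ suitableDom y v u u' Z b
  · by_cases hwx : w = x
    · subst hwx
      rw [h1, pupdate_of_ne _ _ hxy, pupdate_self]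
    by_cases hwy : w = y
    · subst hwy
      rw [h3 w hyQ, pupdate_of_ne _ _ hxy.symm, pupdate_self, pupdate_self]
    rw [pupdate_of_ne _ _ hwy]
    rcases mem_suitableDom.1 hw with hw | rfl | ⟨hb, rfl⟩ | rfl | rfl
    · exact (h2 w (Finset.mem_erase.2 ⟨hwx, hw⟩)).symm
    · exact absurd rfl hwy
    · rw [h3 w (hvQ hb hwx), pupdate_of_ne _ _ hwx, pupdate_of_ne _ _ hwx, pupdate_of_ne _ _ hwy]
    · rw [pupdate_of_ne _ _ hwx, pupdate_of_ne _ _ hwx, (hV.agree t ht r hr).1]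
    · rw [pupdate_of_ne _ _ hwx, pupdate_of_ne _ _ hwx, (hV.agree t ht r hr).2]
  · have hwy : w ≠ y := fun e => hw (mem_suitableDom.2 (.inr (.inl e)))
    rw [pupdate_of_ne _ _ hwy]
    by_cases hwx : w = x
    · subst hwx
      rw [h1]
    · rw [pupdate_of_ne _ _ hwx, pupdate_of_ne _ _ hwx, not_not.1 (mt (hV.dom t ht w).1 hw),
        not_not.1 (mt (hV.dom r hr w).1 hw)]

end Helpers

section Translation

variable {σ : Type} {ar : σ → ℕ}

theorem tsat_all {M : TModel σ ar} {V : Set (PAssign M.A)} {x : ℕ} {φ : TLForm σ ar} :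
    TSat M V (.all x φ) ↔ TSat M (supplement V (fun _ => Set.univ) x) φ := by
  simp [TSat, supplement]

theorem tsat_ex {M : TModel σ ar} {V : Set (PAssign M.A)} {x : ℕ} {φ : TLForm σ ar} :
    TSat M V (.ex x φ) ↔ ∃ f : PAssign M.A → Set M.A, (∀ s ∈ V, (f s).Nonempty) ∧
      TSat M (supplement V f x) φ :=
  Iff.rfl

theorem tsat_Ttr_ex {M : TModel σ ar} {V : Set (PAssign M.A)} {y v u u' x : ℕ} {Z : Finset ℕ}
    {b : Bool} {φ : TLForm (σ ⊕ Unit) (arY ar)} :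
    TSat M V (Ttr y v u u' Z b (.ex x φ)) ↔
      ∃ f : PAssign M.A → Set M.A, (∀ s ∈ V, (f s).Nonempty) ∧
        IndepOver (supplement V f x) (Z.erase x) x (if b then {y, v} else {y}) ∧
        TSat M (supplement V f x) (Ttr y v u u' (insert x Z) b φ) := by
  cases b
  · simp only [Ttr, tsat_ex, TSat, IndepOver, Bool.false_eq_true, if_false,
      forall_sort_get (p := fun z => _ = _), forall_const, Finset.mem_singleton, forall_eq]
  · simp only [Ttr, tsat_ex, TSat, IndepOver, if_true,
      forall_sort_get (p := fun z => _ = _), forall_const, Finset.mem_singleton, forall_eq,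
      Fin.forall_fin_two, Finset.mem_insert, forall_eq_or_imp]
    rfl

theorem tsat_Ttr_or {M : TModel σ ar} {V : Set (PAssign M.A)} {y v u u' : ℕ} {Z : Finset ℕ}
    {b : Bool} {φ ψ : TLForm (σ ⊕ Unit) (arY ar)} :
    TSat M V (Ttr y v u u' Z b (.or φ ψ)) ↔
      ∃ f : PAssign M.A → Set M.A, (∀ s ∈ V, (f s).Nonempty) ∧
        IndepOver (supplement V f v) Z v {y} ∧
        ∃ W₀ W₁ : Set (PAssign M.A), W₀ ⊆ supplement V f v ∧ W₁ ⊆ supplement V f v ∧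
          W₀ ∪ W₁ = supplement V f v ∧
          (TSat M W₀ (Ttr y v u u' Z true φ) ∧ TSat M W₀ (.eq v u)) ∧
          (TSat M W₁ (Ttr y v u u' Z true ψ) ∧ TSat M W₁ (.eq v u')) := by
  simp only [Ttr, tsat_ex, TSat, IndepOver,
    forall_sort_get (p := fun z => _ = _), forall_const, Finset.mem_singleton, forall_eq]

/-- Satisfaction in `(𝔄, Y ↦ S)`, for teams over the domain of `𝔄`. -/
def TSatY (M : TModel σ ar) (S : Set M.A) (U : Set (PAssign M.A))
    (φ : TLForm (σ ⊕ Unit) (arY ar)) : Prop :=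
  TSat (expandY M S) U φ

theorem tsatY_all {M : TModel σ ar} {S : Set M.A} {U : Set (PAssign M.A)} {x : ℕ}
    {φ : TLForm (σ ⊕ Unit) (arY ar)} :
    TSatY M S U (.all x φ) ↔ TSatY M S (supplement U (fun _ => Set.univ) x) φ :=
  tsat_all (M := expandY M S)

theorem tsatY_ex {M : TModel σ ar} {S : Set M.A} {U : Set (PAssign M.A)} {x : ℕ}
    {φ : TLForm (σ ⊕ Unit) (arY ar)} :
    TSatY M S U (.ex x φ) ↔ ∃ f : PAssign M.A → Set M.A, (∀ s ∈ U, (f s).Nonempty) ∧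
      TSatY M S (supplement U f x) φ :=
  Iff.rfl

theorem tsatY_or {M : TModel σ ar} {S : Set M.A} {U : Set (PAssign M.A)}
    {φ ψ : TLForm (σ ⊕ Unit) (arY ar)} :
    TSatY M S U (.or φ ψ) ↔ ∃ U₀ U₁ : Set (PAssign M.A),
      U₀ ⊆ U ∧ U₁ ⊆ U ∧ U₀ ∪ U₁ = U ∧ TSatY M S U₀ φ ∧ TSatY M S U₁ ψ :=
  Iff.rfl

theorem suitable_dep_iff {A : Type} {V : Set (PAssign A)} {Z : Finset ℕ} {k : ℕ}
    {xs : Fin k → ℕ} {x : ℕ} (hxs : ∀ i, xs i ∈ Z) (hx : x ∈ Z) :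
    (∀ s ∈ (fun s => restrictP s Z) '' V, ∀ t ∈ (fun s => restrictP s Z) '' V,
      (∀ i, s (xs i) = t (xs i)) → s x = t x) ↔
    ∀ s ∈ V, ∀ t ∈ V, (∀ i, s (xs i) = t (xs i)) → s x = t x := by
  simp only [Set.forall_mem_image, restrictP_of_mem _ hx, restrictP_of_mem _ (hxs _)]

theorem tsatY_ex_iff (M : TModel σ ar) {S : Set M.A} {y v u u' x : ℕ}
    {φ : TLForm (σ ⊕ Unit) (arY ar)} {Z : Finset ℕ} {b : Bool} {V : Set (PAssign M.A)}
    (hx : x ≠ y ∧ x ≠ u ∧ x ≠ u') (hxv : x ≠ v) (hyZ : y ∉ Z)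
    (hV : SuitableTeam S y v u u' Z b V)
    (ih : ∀ W : Set (PAssign M.A), SuitableTeam S y v u u' (insert x Z) b W →
      (TSatY M S ((fun s : PAssign M.A => restrictP s (insert x Z)) '' W) φ ↔
        TSat M W (Ttr y v u u' (insert x Z) b φ))) :
    TSatY M S ((fun s : PAssign M.A => restrictP s Z) '' V) (.ex x φ) ↔
      TSat M V (Ttr y v u u' Z b (.ex x φ)) := by
  rw [tsat_Ttr_ex, tsatY_ex]
  constructor
  · rintro ⟨f, hf, hφ⟩
    let U' : Set (PAssign M.A) := supplement ((fun s : PAssign M.A => restrictP s Z) '' V) f x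
    let g : PAssign M.A → Set M.A := fun s => {a | pupdate (restrictP s Z) x a ∈ U'}
    have hgy : ∀ s c, g (pupdate s y c) = g s := fun s c => by
      simp only [g, restrictP_pupdate_of_notMem s hyZ c]
    have hW := hV.of_supplement hx (supplement_closed (f := g) hx.1 hV.closed hgy)
    refine ⟨g, ?_, ?_, ?_⟩
    · intro s hs
      obtain ⟨a, ha⟩ := hf _ ⟨s, hs, rfl⟩
      exact ⟨a, _, ⟨s, hs, rfl⟩, a, ha, rfl⟩
    · rintro _ ⟨s, hs, a, ha, rfl⟩ _ ⟨s', hs', a', ha', rfl⟩ hz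
      refine ⟨pupdate s' x a, ⟨s', hs', a, ?_, rfl⟩, ?_, ?_, ?_⟩
      · have : pupdate (restrictP s' Z) x a = pupdate (restrictP s Z) x a := by
          rw [← restrictP_pupdate_insert, ← restrictP_pupdate_insert, restrictP_eq_iff]
          intro z hz'
          by_cases hzx : z = x
          · simp only [hzx, pupdate_self]
          · have := hz z (by grind)
            simp only [pupdate_of_ne _ _ hzx] at this ⊢
            exact this.symm
        change pupdate (restrictP s' Z) x a ∈ U'
        rw [this]
        exact ha
      · simp only [pupdate_self]
      · intro z hz'
        have := hz z hz'
        simp only [pupdate_of_ne _ _ (Finset.ne_of_mem_erase hz')] at this ⊢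
        exact this.symm
      · intro q hq
        have hqx : q ≠ x := by
          rintro rfl
          have : q = y ∨ q = v := by cases b <;> simp at hq <;> tauto
          exact this.elim hx.1 hxv
        simp only [pupdate_of_ne _ _ hqx]
    · rw [← ih _ hW]
      convert hφ using 1
      change _ = U'
      rw [image_restrictP_supplement]
      ext r
      constructor
      · rintro ⟨_, -, a, ⟨t, -, rfl, ha⟩, rfl⟩
        exact ha
      · rintro ⟨_, ⟨t, ht, rfl⟩, a, ha, rfl⟩
        exact ⟨_, ⟨t, ht, rfl⟩, a, ⟨t, ht, rfl, _, ⟨t, ht, rfl⟩, a, ha, rfl⟩, rfl⟩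
  · rintro ⟨f, hf, hind, hφ⟩
    have hcl := hV.closed_of_indepOver hf hx hyZ (by cases b <;> simp)
      (by rintro rfl -; simp) hind
    rw [← ih _ (hV.of_supplement hx hcl), image_restrictP_supplement] at hφ
    refine ⟨_, ?_, hφ⟩
    rintro _ ⟨s, hs, rfl⟩
    obtain ⟨a, ha⟩ := hf s hs
    exact ⟨a, s, hs, rfl, ha⟩

theorem tsatY_or_iff (M : TModel σ ar) {S : Set M.A} {y v u u' : ℕ}
    (hdist : y ≠ v ∧ y ≠ u ∧ y ≠ u' ∧ v ≠ u ∧ v ≠ u' ∧ u ≠ u')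
    {φ ψ : TLForm (σ ⊕ Unit) (arY ar)} {Z : Finset ℕ} {b : Bool} {V : Set (PAssign M.A)}
    (hyZ : y ∉ Z) (hvZ : v ∉ Z) (hV : SuitableTeam S y v u u' Z b V)
    (ihφ : ∀ W : Set (PAssign M.A), SuitableTeam S y v u u' Z true W →
      (TSatY M S ((fun s : PAssign M.A => restrictP s Z) '' W) φ ↔
        TSat M W (Ttr y v u u' Z true φ)))
    (ihψ : ∀ W : Set (PAssign M.A), SuitableTeam S y v u u' Z true W →
      (TSatY M S ((fun s : PAssign M.A => restrictP s Z) '' W) ψ ↔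
        TSat M W (Ttr y v u u' Z true ψ))) :
    TSatY M S ((fun s : PAssign M.A => restrictP s Z) '' V) (.or φ ψ) ↔
      TSat M V (Ttr y v u u' Z b (.or φ ψ)) := by
  obtain ⟨hyv, hyu, hyu', hvu, hvu', huu'⟩ := hdist
  have hv : v ≠ y ∧ v ≠ u ∧ v ≠ u' := ⟨hyv.symm, hvu, hvu'⟩
  rw [tsat_Ttr_or, tsatY_or]
  constructor
  · rintro ⟨U₀, U₁, hU₀, hU₁, hU, hφ, hψ⟩
    let R (T : Set (PAssign M.A)) (w : ℕ) (s : PAssign M.A) : Set M.A :=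
      {a | restrictP s Z ∈ T ∧ s w = some a}
    have hR : ∀ T w, w ≠ y → ∀ s c, R T w (pupdate s y c) = R T w s := fun T w hw s c => by
      simp only [R, restrictP_pupdate_of_notMem s hyZ c, pupdate_of_ne s c hw]
    let g : PAssign M.A → Set M.A := fun s => R U₀ u s ∪ R U₁ u' s
    have hsome : ∀ s ∈ V, (∃ a, s u = some a) ∧ ∃ a, s u' = some a := fun s hs =>
      ⟨Option.ne_none_iff_exists'.1 ((hV.dom s hs u).2 (mem_suitableDom.2 (by simp))),
        Option.ne_none_iff_exists'.1 ((hV.dom s hs u').2 (mem_suitableDom.2 (by simp)))⟩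
    have hsup : ∀ T w, (∀ s, R T w s ⊆ g s) → supplement V (R T w) v ⊆ supplement V g v := by
      rintro T w h _ ⟨s, hs, a, ha, rfl⟩
      exact ⟨s, hs, a, h s ha, rfl⟩
    have himg : ∀ T w, T ⊆ (fun s : PAssign M.A => restrictP s Z) '' V →
        (∀ s ∈ V, ∃ a, s w = some a) →
        (fun s : PAssign M.A => restrictP s Z) '' supplement V (R T w) v = T := by
      intro T w hT hw
      ext r
      constructor
      · rintro ⟨_, ⟨s, hs, a, ha, rfl⟩, rfl⟩
        simp only [restrictP_pupdate_of_notMem s hvZ a]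
        exact ha.1
      · intro hr
        obtain ⟨s, hs, rfl⟩ := hT hr
        obtain ⟨a, ha⟩ := hw s hs
        exact ⟨_, ⟨s, hs, a, ⟨hr, ha⟩, rfl⟩, restrictP_pupdate_of_notMem s hvZ a⟩
    have heq : ∀ T w, w ≠ v → TSat M (supplement V (R T w) v) (.eq v w) := by
      rintro T w hw _ ⟨s, hs, a, ha, rfl⟩
      exact ⟨a, pupdate_self s v a, (pupdate_of_ne s a hw).trans ha.2⟩
    have h₀ := hsup U₀ u fun s => Set.subset_union_left
    have h₁ := hsup U₁ u' fun s => Set.subset_union_right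
    refine ⟨g, ?_, ?_, supplement V (R U₀ u) v, supplement V (R U₁ u') v, h₀, h₁, ?_,
      ⟨?_, heq _ _ hvu.symm⟩, ?_, heq _ _ hvu'.symm⟩
    · intro s hs
      have hs' : restrictP s Z ∈ U₀ ∪ U₁ := by
        rw [hU]
        exact ⟨s, hs, rfl⟩
      obtain ⟨⟨a, ha⟩, a', ha'⟩ := hsome s hs
      exact hs'.elim (fun h => ⟨a, .inl ⟨h, ha⟩⟩) fun h => ⟨a', .inr ⟨h, ha'⟩⟩
    · rintro _ ⟨s, hs, a, ha, rfl⟩ _ ⟨s', hs', a', ha', rfl⟩ hz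
      have hz' : ∀ z ∈ Z, s z = s' z := fun z h => by
        have := hz z h
        have hzv : z ≠ v := fun e => hvZ (e ▸ h)
        simpa only [pupdate_of_ne _ _ hzv] using this
      refine ⟨pupdate s' v a, ⟨s', hs', a, ?_, rfl⟩, by simp only [pupdate_self], ?_, ?_⟩
      · simp only [g, R, Set.mem_union, Set.mem_ofPred_eq] at ha ⊢
        rw [← restrictP_eq_iff.2 hz', ← (hV.agree s hs s' hs').1, ← (hV.agree s hs s' hs').2]
        exact ha
      · intro z h
        have hzv : z ≠ v := fun e => hvZ (e ▸ h)
        simpa only [pupdate_of_ne _ _ hzv] using (hz' z h).symm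
      · intro q hq
        rw [Finset.mem_singleton.1 hq, pupdate_of_ne _ _ hyv, pupdate_of_ne _ _ hyv]
    · refine (Set.union_subset h₀ h₁).antisymm ?_
      rintro _ ⟨s, hs, a, ha | ha, rfl⟩
      exacts [.inl ⟨s, hs, a, ha, rfl⟩, .inr ⟨s, hs, a, ha, rfl⟩]
    · rw [← ihφ _ (hV.of_subset_supplement hv h₀
        (supplement_closed hyv.symm hV.closed (hR _ _ hyu.symm))),
        himg U₀ u hU₀ fun s hs => (hsome s hs).1]
      exact hφ
    · rw [← ihψ _ (hV.of_subset_supplement hv h₁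
        (supplement_closed hyv.symm hV.closed (hR _ _ hyu'.symm))),
        himg U₁ u' hU₁ fun s hs => (hsome s hs).2]
      exact hψ
  · rintro ⟨f, hf, hind, W₀, W₁, hW₀, hW₁, hW, ⟨hφ, hφu⟩, hψ, hψu⟩
    have hcl := hV.closed_of_indepOver hf hv hyZ (Q := {y}) (by simp)
      (fun _ h => absurd rfl h) (by rwa [Finset.erase_eq_of_notMem hvZ])
    have hSW := hV.of_subset_supplement hv subset_rfl hcl
    have hcl₀ : ∀ s ∈ W₀, ∀ c ∈ S, pupdate s y c ∈ W₀ := by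
      intro s hs c hc
      have h := hcl s (hW₀ hs) c hc
      have hne := hSW.ne _ h
      rw [← hW] at h
      refine h.resolve_right fun h => hne ?_
      obtain ⟨a, ha, ha'⟩ := hφu s hs
      obtain ⟨a', hb, hb'⟩ := hψu _ h
      rw [hb', pupdate_of_ne _ _ hyu.symm, ha', ← ha, ← hb, pupdate_of_ne _ _ hyv.symm]
    have hcl₁ : ∀ s ∈ W₁, ∀ c ∈ S, pupdate s y c ∈ W₁ := by
      intro s hs c hc
      have h := hcl s (hW₁ hs) c hc
      have hne := hSW.ne _ h
      rw [← hW] at h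
      refine h.resolve_left fun h => hne ?_
      obtain ⟨a, ha, ha'⟩ := hψu s hs
      obtain ⟨a', hb, hb'⟩ := hφu _ h
      rw [hb', pupdate_of_ne _ _ hyu'.symm, ha', ← ha, ← hb, pupdate_of_ne _ _ hyv.symm]
    have himg : (fun s : PAssign M.A => restrictP s Z) '' supplement V f v =
        (fun s : PAssign M.A => restrictP s Z) '' V := by
      ext r
      constructor
      · rintro ⟨_, ⟨s, hs, a, ha, rfl⟩, rfl⟩
        exact ⟨s, hs, (restrictP_pupdate_of_notMem s hvZ a).symm⟩
      · rintro ⟨s, hs, rfl⟩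
        obtain ⟨a, ha⟩ := hf s hs
        exact ⟨_, ⟨s, hs, a, ha, rfl⟩, restrictP_pupdate_of_notMem s hvZ a⟩
    refine ⟨(fun s : PAssign M.A => restrictP s Z) '' W₀,
      (fun s : PAssign M.A => restrictP s Z) '' W₁, ?_, ?_, ?_,
      (ihφ _ (hV.of_subset_supplement hv hW₀ hcl₀)).2 hφ,
      (ihψ _ (hV.of_subset_supplement hv hW₁ hcl₁)).2 hψ⟩
    · exact himg ▸ Set.image_mono hW₀
    · exact himg ▸ Set.image_mono hW₁
    · rw [← himg, ← hW, Set.image_union]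

/-- The translation is correct on every suitable pair `(V ↾ Z, V)`. -/
theorem tsatY_iff_tsat_Ttr (M : TModel σ ar) {S : Set M.A} {y v u u' : ℕ}
    (hdist : y ≠ v ∧ y ≠ u ∧ y ≠ u' ∧ v ≠ u ∧ v ≠ u' ∧ u ≠ u')
    (φ : TLForm (σ ⊕ Unit) (arY ar)) :
    ∀ (Z : Finset ℕ) (b : Bool) (V : Set (PAssign M.A)), φ.IsDL → φ.freeVars ⊆ Z →
      (y ∉ φ.vars ∧ v ∉ φ.vars ∧ u ∉ φ.vars ∧ u' ∉ φ.vars) → (y ∉ Z ∧ v ∉ Z) →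
      SuitableTeam S y v u u' Z b V →
      (TSatY M S ((fun s : PAssign M.A => restrictP s Z) '' V) φ ↔
        TSat M V (Ttr y v u u' Z b φ)) := by
  induction φ with
  | rel R ts =>
    intro Z b V _ hfv _ _ hV
    have hts : ∀ i, ts i ∈ Z := fun i => hfv (by simp [TLForm.freeVars])
    have hres (s : PAssign M.A) (i) : restrictP s Z (ts i) = s (ts i) := restrictP_of_mem s (hts i)
    rcases R with R | R
    · refine Set.forall_mem_image.trans ?_
      simp only [hres]
      rfl
    · refine Set.forall_mem_image.trans ?_
      simp only [hres]
      refine forall₂_congr fun s hs => ⟨?_, ?_⟩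
      · rintro ⟨vv, hvv, hS⟩
        refine ⟨_, hV.closed s hs _ hS, fun _ => ?_⟩
        rw [hvv]
        exact pupdate_self s y _
      · rintro ⟨t, ht, h⟩
        obtain ⟨c, hc, htc⟩ := hV.val t ht
        refine ⟨fun _ => c, fun i => ?_, hc⟩
        obtain rfl : i = ⟨0, Nat.one_pos⟩ := Subsingleton.elim (α := Fin 1) _ _
        exact (h 0).symm.trans htc
  | nrel R ts =>
    intro Z b V _ hfv _ _ hV
    have hts : ∀ i, ts i ∈ Z := fun i => hfv (by simp [TLForm.freeVars])
    have hres (s : PAssign M.A) (i) : restrictP s Z (ts i) = s (ts i) := restrictP_of_mem s (hts i)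
    rcases R with R | R
    · refine Set.forall_mem_image.trans ?_
      simp only [hres]
      rfl
    · refine Set.forall_mem_image.trans ?_
      simp only [hres]
      refine forall₂_congr fun s hs => ⟨?_, ?_⟩
      · rintro ⟨vv, hvv, hS⟩ t ht h
        obtain ⟨c, hc, htc⟩ := hV.val t ht
        have := ((hvv ⟨0, Nat.one_pos⟩).symm.trans (h 0)).trans htc
        exact hS ((congrArg (· ∈ S) (Option.some.inj this)).mpr hc)
      · intro h
        obtain ⟨a, ha⟩ := Option.ne_none_iff_exists'.1
          ((hV.dom s hs (ts ⟨0, Nat.one_pos⟩)).2 (mem_suitableDom.2 (.inl (hts _))))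
        refine ⟨fun _ => a, fun i => ?_, fun haS => ?_⟩
        · obtain rfl : i = ⟨0, Nat.one_pos⟩ := Subsingleton.elim (α := Fin 1) _ _
          exact ha
        · exact h _ (hV.closed s hs a haS) fun _ => ha.trans (pupdate_self s y a).symm
  | eq x z =>
    intro Z b V _ hfv _ _ _
    have hx : x ∈ Z := hfv (by simp [TLForm.freeVars])
    have hz : z ∈ Z := hfv (by simp [TLForm.freeVars])
    refine Set.forall_mem_image.trans ?_
    simp only [restrictP_of_mem _ hx, restrictP_of_mem _ hz]
    rfl
  | neq x z =>
    intro Z b V _ hfv _ _ _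
    have hx : x ∈ Z := hfv (by simp [TLForm.freeVars])
    have hz : z ∈ Z := hfv (by simp [TLForm.freeVars])
    refine Set.forall_mem_image.trans ?_
    simp only [restrictP_of_mem _ hx, restrictP_of_mem _ hz]
    rfl
  | dep k xs x =>
    intro Z b V _ hfv _ _ _
    exact suitable_dep_iff (fun i => hfv (by simp [TLForm.freeVars]))
      (hfv (by simp [TLForm.freeVars]))
  | incl => exact fun _ _ _ h => h.elim
  | excl => exact fun _ _ _ h => h.elim
  | cindep => exact fun _ _ _ h => h.elim
  | and φ ψ ihφ ihψ =>
    intro Z b V hDL hfv hfresh hZ hV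
    simp only [TLForm.freeVars, Finset.union_subset_iff] at hfv
    simp only [TLForm.vars, Finset.mem_union, not_or] at hfresh
    exact and_congr (ihφ Z b V hDL.1 hfv.1 (by tauto) hZ hV) (ihψ Z b V hDL.2 hfv.2 (by tauto) hZ hV)
  | or φ ψ ihφ ihψ =>
    intro Z b V hDL hfv hfresh hZ hV
    simp only [TLForm.freeVars, Finset.union_subset_iff] at hfv
    simp only [TLForm.vars, Finset.mem_union, not_or] at hfresh
    exact tsatY_or_iff M hdist hZ.1 hZ.2 hV
      (fun W hW => ihφ Z true W hDL.1 hfv.1 (by tauto) hZ hW)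
      (fun W hW => ihψ Z true W hDL.2 hfv.2 (by tauto) hZ hW)
  | all x φ ih =>
    intro Z b V hDL hfv hfresh hZ hV
    simp only [TLForm.vars, Finset.mem_insert, not_or] at hfresh
    have hx : x ≠ y ∧ x ≠ u ∧ x ≠ u' := by grind
    have := ih (insert x Z) b _ hDL (Finset.subset_insert_iff.2 hfv) (by tauto)
      (by grind) (hV.of_supplement hx
        (supplement_closed (f := fun _ => Set.univ) hx.1 hV.closed fun _ _ => rfl))
    rw [Ttr, tsat_all, ← this, tsatY_all, image_restrictP_supplement]
    refine iff_of_eq (congrArg (fun W => TSatY M S W φ) ?_)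
    ext r
    constructor
    · rintro ⟨_, ⟨t, ht, rfl⟩, a, -, rfl⟩
      exact ⟨_, ⟨t, ht, rfl⟩, a, ⟨t, ht, rfl, trivial⟩, rfl⟩
    · rintro ⟨_, ⟨t, ht, rfl⟩, a, -, rfl⟩
      exact ⟨_, ⟨t, ht, rfl⟩, a, trivial, rfl⟩
  | ex x φ ih =>
    intro Z b V hDL hfv hfresh hZ hV
    simp only [TLForm.vars, Finset.mem_insert, not_or] at hfresh
    exact tsatY_ex_iff M (by grind) (by grind) hZ.1 hV fun W hW =>
      ih (insert x Z) b W hDL (Finset.subset_insert_iff.2 hfv) (by tauto) (by grind) hW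

end Translation

/-- Lemma 7 of the paper.  Let `χ` be a sentence of dependence logic not containing the
variables `y,v,u,u'`, let `𝔄` be a model with at least two elements, let `Y` be a unary
relation symbol occurring neither in `χ` nor in the vocabulary of `𝔄`, and let `S ⊆ A`.
If `({∅},V)` is a suitable pair for `𝔄`, `S`, `(y,v,u,u')` and `(χ,χ)`, then
`(𝔄,Y↦S),{∅} ⊨ χ` iff `𝔄,V ⊨ T_Y^y(χ)`. -/
theorem stmt8 (σ : Type) (ar : σ → ℕ) (M : TModel σ ar)
    (htwo : ∃ a b : M.A, a ≠ b)
    (S : Set M.A)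
    (χ : TLForm (σ ⊕ Unit) (arY ar))
    (hDL : χ.IsDL) (hsent : χ.freeVars = ∅)
    (hY : ¬ χ.UsesRel (Sum.inr ()))
    (y v u u' : ℕ)
    (hdist : y ≠ v ∧ y ≠ u ∧ y ≠ u' ∧ v ≠ u ∧ v ≠ u' ∧ u ≠ u')
    (hfresh : y ∉ χ.vars ∧ v ∉ χ.vars ∧ u ∉ χ.vars ∧ u' ∉ χ.vars)
    (V : Set (PAssign M.A))
    (hsuit : SuitablePair M.A S y v u u' ∅ false {emptyA} V) :
    TSat (expandY M S) {(emptyA : PAssign M.A)} χ ↔ TSat M V (Ttr y v u u' ∅ false χ) := by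
  have hU : ({emptyA} : Set (PAssign M.A)) = (fun s => restrictP s ∅) '' V := hsuit.2.2.1
  change TSatY M S {emptyA} χ ↔ _
  rw [hU, tsatY_iff_tsat_Ttr M hdist χ ∅ false V hDL (hsent ▸ subset_rfl) hfresh (by simp)
    hsuit.suitableTeam]
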